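/- Let k ∈ ℕ, let P ⊂ ℝ^k be a polytope with rational vertices, and let m ∈ ℕ be such that mP is a lattice polytope. If n ∈ ℕ satisfies n ≥ mk and n ≡ r (mod m) with r ∈ {0,1,…,m−1}, then nP ∩ ℤ^k = ((n−mk−r)/m)*(mP ∩ ℤ^k) + ((mk+r)P ∩ ℤ^k), where the sumset operations are taken in (ℤ^k, +). -/

import Mathlib

open Pointwise

/-- The `n`-fold sumset `n*A` in the additive group `ℤ^k`, with `0*A = {0}`. -/
def iterSumset {G : Type*} [AddCommMonoid G] : ℕ → Set G → Set G
  | 0, _ => {0}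
  | n + 1, A => iterSumset n A + A


/-- Lattice points of the dilate. -/
def latPts {k : ℕ} (P : Set (Fin k → ℝ)) (t : ℕ) : Set (Fin k → ℤ) :=
  {a : Fin k → ℤ | (fun i => (a i : ℝ)) ∈ (t : ℝ) • P}

theorem latPts_add {k : ℕ} {P : Set (Fin k → ℝ)} (hP : Convex ℝ P) (s t : ℕ) :
    latPts P s + latPts P t ⊆ latPts P (s + t) := by
  rintro _ ⟨a, ha, b, hb, rfl⟩
  have h := hP.add_smul (Nat.cast_nonneg (α := ℝ) s) (Nat.cast_nonneg (α := ℝ) t)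
  simp only [latPts, Set.mem_ofPred_eq] at *
  rw [Nat.cast_add, h]
  refine ⟨_, ha, _, hb, ?_⟩
  ext i
  simp

theorem iter_latPts {k : ℕ} {P : Set (Fin k → ℝ)} (hP : Convex ℝ P) (hne : P.Nonempty)
    (m q : ℕ) : iterSumset q (latPts P m) ⊆ latPts P (m * q) := by
  induction q with
  | zero =>
    rintro _ rfl
    obtain ⟨x, hx⟩ := hne
    refine ⟨x, hx, ?_⟩
    ext i
    simp
  | succ q ih =>
    rw [Nat.mul_succ]
    exact (Set.add_subset_add_right ih).trans (latPts_add hP _ _)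

theorem latPts_step {k : ℕ} (hk : 0 < k) (V : Finset (Fin k → ℝ)) (m : ℕ) (hm : 0 < m)
    (hmV : ∀ v ∈ V, ∀ i, ∃ z : ℤ, (m : ℝ) * v i = (z : ℝ)) (t : ℕ) (ht : m * k ≤ t)
    (a : Fin k → ℤ) (ha : a ∈ latPts (convexHull ℝ (V : Set (Fin k → ℝ))) (t + m)) :
    ∃ v ∈ latPts (convexHull ℝ (V : Set (Fin k → ℝ))) m,
      ∃ b ∈ latPts (convexHull ℝ (V : Set (Fin k → ℝ))) t, b + v = a := by
  obtain ⟨x, hx, hxa⟩ := ha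
  obtain ⟨ι, _, z, w, hz, hind, hw, hsum, hzx⟩ := eq_pos_convex_span_of_mem_convexHull hx
  have hcard : Fintype.card ι ≤ k + 1 := by
    refine hind.card_le_finrank_succ.trans ?_
    have := Submodule.finrank_le (vectorSpan ℝ (Set.range z))
    simp at this
    omega
  have htpos : 0 < t := lt_of_lt_of_le (Nat.mul_pos hm hk) ht
  have htR : (0 : ℝ) < t := by exact_mod_cast htpos
  obtain ⟨j, hj⟩ : ∃ j, (m : ℝ) ≤ (t + m : ℝ) * w j := by
    by_contra! hcon
    have hne : (Finset.univ : Finset ι).Nonempty := by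
      by_contra h
      rw [Finset.not_nonempty_iff_eq_empty] at h
      rw [h] at hsum
      simp at hsum
    have h1 : ∑ j, (t + m : ℝ) * w j < ∑ _j : ι, (m : ℝ) :=
      Finset.sum_lt_sum_of_nonempty hne (fun j _ => hcon j)
    rw [← Finset.mul_sum, hsum] at h1
    simp only [Finset.sum_const, Finset.card_univ, nsmul_eq_mul, mul_one] at h1
    have h2 : t + m < Fintype.card ι * m := by exact_mod_cast h1
    nlinarith
  have hzj : z j ∈ V := hz ⟨j, rfl⟩
  choose v hv using hmV (z j) hzj
  classical
  refine ⟨v, ⟨z j, subset_convexHull ℝ _ hzj, ?_⟩, a - v, ?_, sub_add_cancel a v⟩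
  · ext i
    simp [hv]
  · refine ⟨∑ i, ((((t + m : ℝ) * w i) - if i = j then (m : ℝ) else 0) / t) • z i,
      (convex_convexHull ℝ _).sum_mem ?_ ?_ ?_, ?_⟩
    · intro i _
      refine div_nonneg ?_ htR.le
      split_ifs with h
      · subst h; linarith
      · have := hw i
        simp only [sub_zero]
        positivity
    · rw [← Finset.sum_div, Finset.sum_sub_distrib, ← Finset.mul_sum, hsum]
      simp [htR.ne']
    · intro i _
      exact subset_convexHull ℝ _ (hz ⟨i, rfl⟩)
    · have h1 : (t : ℝ) • ∑ i, ((((t + m : ℝ) * w i) - if i = j then (m : ℝ) else 0) / t) • z i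
          = (t + m : ℝ) • x - (m : ℝ) • z j := by
        rw [← hzx, Finset.smul_sum, Finset.smul_sum]
        have : (m : ℝ) • z j = ∑ i, (if i = j then (m : ℝ) else 0) • z i := by
          simp
        rw [this, ← Finset.sum_sub_distrib]
        refine Finset.sum_congr rfl fun i _ => ?_
        rw [smul_smul, smul_smul, ← sub_smul, mul_div_cancel₀ _ htR.ne']
      refine h1.trans ?_
      ext i
      have h2 := congrFun hxa i
      simp at h2
      simp [hv, h2]

theorem latPts_decomp {k : ℕ} (hk : 0 < k) (V : Finset (Fin k → ℝ)) (m : ℕ) (hm : 0 < m)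
    (hmV : ∀ v ∈ V, ∀ i, ∃ z : ℤ, (m : ℝ) * v i = (z : ℝ)) (r q : ℕ) :
    latPts (convexHull ℝ (V : Set (Fin k → ℝ))) (m * q + (m * k + r)) ⊆
      iterSumset q (latPts (convexHull ℝ (V : Set (Fin k → ℝ))) m) +
        latPts (convexHull ℝ (V : Set (Fin k → ℝ))) (m * k + r) := by
  induction q with
  | zero =>
    intro a ha
    rw [mul_zero, zero_add] at ha
    exact ⟨0, rfl, a, ha, zero_add a⟩
  | succ q ih =>
    intro a ha
    have e : m * (q + 1) + (m * k + r) = (m * q + (m * k + r)) + m := by ring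
    rw [e] at ha
    obtain ⟨v, hv, b, hb, rfl⟩ := latPts_step hk V m hm hmV _ (by omega) a ha
    obtain ⟨c, hc, d, hd, rfl⟩ := ih hb
    refine ⟨c + v, ⟨c, hc, v, hv, rfl⟩, d, hd, ?_⟩
    simp only []
    abel

/-- geometric lemma, rational case. Let `k ∈ ℕ`, `k ≥ 1`, let
`P ⊂ ℝ^k` be a polytope with rational vertices (the convex hull of a nonempty finite
set `V` of points with rational coordinates), and let `m ∈ ℕ` be such that `mP` is a
lattice polytope. If `n ∈ ℕ` satisfies `n ≥ mk` and `n ≡ r (mod m)` with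
`r = n % m ∈ {0,…,m−1}`, then
`nP ∩ ℤ^k = ((n−mk−r)/m)*(mP ∩ ℤ^k) + ((mk+r)P ∩ ℤ^k)` as subsets of `(ℤ^k, +)`. -/
theorem dilated_rational_polytope_lattice_points_decomposition
    {k : ℕ} (hk : 0 < k) (V : Finset (Fin k → ℝ)) (hVne : V.Nonempty)
    (hV : ∀ v ∈ V, ∀ i, ∃ q : ℚ, v i = (q : ℝ))
    (m : ℕ) (hm : 0 < m)
    (hmV : ∀ v ∈ V, ∀ i, ∃ z : ℤ, (m : ℝ) * v i = (z : ℝ)) :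
    ∀ n : ℕ, m * k ≤ n →
      {a : Fin k → ℤ |
          (fun i => (a i : ℝ)) ∈ (n : ℝ) • convexHull ℝ (V : Set (Fin k → ℝ))} =
        iterSumset ((n - m * k - n % m) / m)
            {a : Fin k → ℤ |
              (fun i => (a i : ℝ)) ∈ (m : ℝ) • convexHull ℝ (V : Set (Fin k → ℝ))} +
          {a : Fin k → ℤ |
            (fun i => (a i : ℝ)) ∈
              ((m * k + n % m : ℕ) : ℝ) • convexHull ℝ (V : Set (Fin k → ℝ))} := by
  intro n hn
  obtain ⟨q, hq⟩ : ∃ q, n = m * q + (m * k + n % m) := by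
    have h1 : k ≤ n / m := (Nat.le_div_iff_mul_le hm).2 (by rwa [mul_comm])
    obtain ⟨q, hq⟩ := Nat.exists_eq_add_of_le h1
    refine ⟨q, ?_⟩
    have h2 := Nat.div_add_mod n m
    rw [hq] at h2
    rw [← add_assoc, ← mul_add, add_comm q k]
    exact h2.symm
  have hd : (n - m * k - n % m) / m = q := by
    have : n - m * k - n % m = m * q := by omega
    rw [this, Nat.mul_div_cancel_left _ hm]
  rw [hd]
  have hP : Convex ℝ (convexHull ℝ (V : Set (Fin k → ℝ))) := convex_convexHull ℝ _
  have hne : (convexHull ℝ (V : Set (Fin k → ℝ))).Nonempty := by simpa using hVne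
  change latPts (convexHull ℝ (V : Set (Fin k → ℝ))) n =
    iterSumset q (latPts (convexHull ℝ (V : Set (Fin k → ℝ))) m) +
      latPts (convexHull ℝ (V : Set (Fin k → ℝ))) (m * k + n % m)
  apply Set.Subset.antisymm
  · have := latPts_decomp hk V m hm hmV (n % m) q
    rwa [← hq] at this
  · have := (Set.add_subset_add_right (iter_latPts hP hne m q)).trans
      (latPts_add hP (m * q) (m * k + n % m))
    rwa [← hq] at this
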